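/- Let G be a finite simple graph whose maximum degree is at most 2D, and let δ, D be integers with 1 ≤ δ ≤ D. Let P be a walk from u to v with max_{x ∈ support(P)} deg_G(x) ≥ D. Let w be a vertex on P with deg_G(w) ≥ δ such that every vertex strictly after the last occurrence of w on P has degree less than δ, let ℓ be the number of edges of P strictly after that occurrence of w, and let s be any neighbor of w in G. Then there is a walk from u to s of length |P| − ℓ + 1 whose maximum vertex degree lies in [D, 2D]; consequently d_D(u,s) ≤ |P| − ℓ + 1. -/

import Mathlib

/-- The maximum degree of a vertex on (the support of) a walk. -/
def walkMaxDeg {V : Type*} [Fintype V] (G : SimpleGraph V) [DecidableRel G.Adj]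
    {u v : V} (p : G.Walk u v) : ℕ :=
  (p.support.map fun x => G.degree x).foldr max 0

/-- `dD G D u v` is the minimum length of a (not necessarily simple) walk from `u`
to `v` whose maximum vertex degree lies in `[D, 2D]`. -/
noncomputable def dD {V : Type*} [Fintype V] (G : SimpleGraph V)
    [DecidableRel G.Adj] (D : ℕ) (u v : V) : ℕ :=
  sInf {n : ℕ | ∃ p : G.Walk u v,
    D ≤ walkMaxDeg G p ∧ walkMaxDeg G p ≤ 2 * D ∧ p.length = n}

/-!
The detour is the initial segment `P₁` followed by the edge from `w` to `s`. The vertices of `P`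
strictly after `P₁` have degree less than `D`, so every vertex of degree at least `D` on `P` already
lies on `P₁`.
-/

section

variable {V : Type*} [Fintype V] {G : SimpleGraph V} [DecidableRel G.Adj] {D n : ℕ} {u v w s : V}

theorem walkMaxDeg_nil : walkMaxDeg G (.nil : G.Walk u u) = G.degree u := by
  simp [walkMaxDeg]

theorem walkMaxDeg_cons (h : G.Adj u v) (p : G.Walk v w) :
    walkMaxDeg G (.cons h p) = max (G.degree u) (walkMaxDeg G p) := by
  simp [walkMaxDeg]

theorem walkMaxDeg_concat (p : G.Walk u v) (h : G.Adj v w) :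
    walkMaxDeg G (p.concat h) = max (walkMaxDeg G p) (G.degree w) := by
  induction p with
  | nil => simp [walkMaxDeg]
  | cons _ _ ih => simp [walkMaxDeg_cons, ih, max_assoc]

theorem walkMaxDeg_le_iff (p : G.Walk u v) :
    walkMaxDeg G p ≤ n ↔ ∀ x ∈ p.support, G.degree x ≤ n := by
  induction p with
  | nil => simp [walkMaxDeg_nil]
  | cons _ _ ih => simp [walkMaxDeg_cons, ih]

theorem le_walkMaxDeg_iff (p : G.Walk u v) :
    n ≤ walkMaxDeg G p ↔ ∃ x ∈ p.support, n ≤ G.degree x := by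
  induction p with
  | nil => simp [walkMaxDeg_nil]
  | cons _ _ ih => simp [walkMaxDeg_cons, ih]

theorem le_walkMaxDeg_of_le_walkMaxDeg_append (p : G.Walk u v) (q : G.Walk v w)
    (hq : ∀ x ∈ q.support.tail, G.degree x < n) (h : n ≤ walkMaxDeg G (p.append q)) :
    n ≤ walkMaxDeg G p := by
  obtain ⟨x, hx, hnx⟩ := (le_walkMaxDeg_iff _).1 h
  rw [SimpleGraph.Walk.support_append, List.mem_append] at hx
  have hxp : x ∈ p.support := hx.resolve_right fun hxq => (hq x hxq).not_ge hnx
  exact (le_walkMaxDeg_iff p).2 ⟨x, hxp, hnx⟩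

theorem dD_le_length (p : G.Walk u v) (hlower : D ≤ walkMaxDeg G p)
    (hupper : walkMaxDeg G p ≤ 2 * D) : dD G D u v ≤ p.length :=
  Nat.sInf_le ⟨p, hlower, hupper, rfl⟩

theorem detour_to_hitting_vertex_general (P₁ : G.Walk u w) (P₂ : G.Walk w v)
    (hM : D ≤ walkMaxDeg G (P₁.append P₂)) (hP₁ : walkMaxDeg G P₁ ≤ 2 * D)
    (htail : ∀ x ∈ P₂.support.tail, G.degree x < D)
    (hs : G.Adj w s) (hsD : G.degree s ≤ 2 * D) :
    (∃ Q : G.Walk u s, Q.length = P₁.length + 1 ∧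
      D ≤ walkMaxDeg G Q ∧ walkMaxDeg G Q ≤ 2 * D) ∧
    dD G D u s ≤ P₁.length + 1 := by
  have hlength : (P₁.concat hs).length = P₁.length + 1 := P₁.length_concat hs
  have hlower : D ≤ walkMaxDeg G (P₁.concat hs) := by
    rw [walkMaxDeg_concat]
    exact le_max_of_le_left (le_walkMaxDeg_of_le_walkMaxDeg_append P₁ P₂ htail hM)
  have hupper : walkMaxDeg G (P₁.concat hs) ≤ 2 * D := by
    rw [walkMaxDeg_concat]
    exact max_le hP₁ hsD
  exact ⟨⟨P₁.concat hs, hlength, hlower, hupper⟩, hlength ▸ dD_le_length _ hlower hupper⟩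

end

/-- In a graph of maximum degree at most `2D`, with `1 ≤ δ ≤ D`: let `P` be a walk
from `u` to `v` with maximum support degree at least `D`, split as `P = P₁ ++ P₂` at
the last occurrence of a vertex `w` with `deg w ≥ δ` such that every vertex strictly
afterwards has degree `< δ`, and let `s` be a neighbor of `w`.  Then there is a walk
from `u` to `s` of length `|P| − |P₂| + 1` whose maximum vertex degree lies in
`[D, 2D]`; consequently `dD u s ≤ |P| − |P₂| + 1`. -/
theorem detour_to_hitting_vertex {V : Type*} [Fintype V]
    (G : SimpleGraph V) [DecidableRel G.Adj] (D δ : ℕ)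
    (hδ1 : 1 ≤ δ) (hδD : δ ≤ D)
    (hmax : ∀ x : V, G.degree x ≤ 2 * D)
    (u v w s : V) (P : G.Walk u v) (P₁ : G.Walk u w) (P₂ : G.Walk w v)
    (hsplit : P = P₁.append P₂)
    (hM : D ≤ walkMaxDeg G P)
    (hw : δ ≤ G.degree w)
    (htail : ∀ x ∈ P₂.support.tail, G.degree x < δ)
    (hs : G.Adj w s) :
    (∃ Q : G.Walk u s, Q.length = P.length - P₂.length + 1 ∧
      D ≤ walkMaxDeg G Q ∧ walkMaxDeg G Q ≤ 2 * D) ∧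
    dD G D u s ≤ P.length - P₂.length + 1 := by
  subst hsplit
  simpa using detour_to_hitting_vertex_general P₁ P₂ hM ((walkMaxDeg_le_iff P₁).2 fun x _ => hmax x)
    (fun x hx => (htail x hx).trans_le hδD) hs (hmax s)
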